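/- (Grace's Theorem) Let D ⊆ ℂ be a circular domain and let f, g be complex polynomials, both of degree exactly n ≥ 1, which are apolar, i.e. [f,g]_n = 0. If all zeros of f are contained in D, then g has at least one zero in D. -/

import Mathlib

/-!
The polar derivative with pole `w` is adjoint, for the apolarity form, to multiplication by `X - w`.
By Laguerre's theorem, if the zeros of `f` lie in a convex circular domain `D` and `w ∉ D`, then
the polar derivative of `f` has exact degree one less and again all its zeros in `D`. Splitting off
the zeros `w ∉ D` of `g` one at a time therefore reduces `[f,g]_n` to a nonzero constant. Every
circular domain is convex or has a convex complement, and the form is symmetric up to sign, so the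
second case follows by exchanging `f` and `g`.
-/

open Polynomial

/-- The apolarity form `[f,g]_m`. -/
noncomputable def apol (m : ℕ) (f g : Polynomial ℂ) : ℂ :=
  ∑ k ∈ Finset.range (m + 1),
    (-1 : ℂ) ^ k * ((m.choose k : ℂ))⁻¹ * f.coeff k * g.coeff (m - k)

/-- The symmetrization `Sym_N(f)` of a polynomial, as a function on `ι → ℂ`
with `N = card ι`. -/
noncomputable def symFun {ι : Type*} [Fintype ι] (f : Polynomial ℂ) (y : ι → ℂ) : ℂ :=
  ∑ k ∈ Finset.range (Fintype.card ι + 1),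
    (((Fintype.card ι).choose k : ℂ))⁻¹ * f.coeff k *
      MvPolynomial.eval y (MvPolynomial.esymm ι ℂ k)

/-- A circular domain: an open or closed disk or half-plane, or a complement thereof. -/
def IsCircularDomain (D : Set ℂ) : Prop :=
  ∃ (α γ : ℝ) (β : ℂ),
    D = {z : ℂ | α * Complex.normSq z + ((starRingEnd ℂ) β * z).re + γ < 0} ∨
    D = {z : ℂ | α * Complex.normSq z + ((starRingEnd ℂ) β * z).re + γ ≤ 0}

/-- `q_∘(D) = {u : q⁻¹(u) ⊆ D}`. -/
def innerImage (q : Polynomial ℂ) (D : Set ℂ) : Set ℂ :=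
  {u : ℂ | ∀ z : ℂ, q.eval z = u → z ∈ D}

/-- `S_{q,n}(f)(u₁,…,uₙ) = [f∘q, ∏ⱼ (q - uⱼ)]_{nd}`. -/
noncomputable def Sfun (q : Polynomial ℂ) (n : ℕ) (f : Polynomial ℂ) (u : Fin n → ℂ) : ℂ :=
  apol (n * q.natDegree) (f.comp q) (∏ j, (q - Polynomial.C (u j)))

/-- The Fischer inner product `⟨f,g⟩_n`. -/
noncomputable def fischer (n : ℕ) (f g : Polynomial ℂ) : ℂ :=
  ∑ k ∈ Finset.range (n + 1),
    ((n.choose k : ℂ))⁻¹ * f.coeff k * (starRingEnd ℂ) (g.coeff k)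

section CircularForm

/-- The real quadratic polynomial `α|z|² + Re(β̄z) + γ` whose sublevel sets are the circular
domains. -/
noncomputable def circularForm (α γ : ℝ) (β z : ℂ) : ℝ :=
  α * Complex.normSq z + ((starRingEnd ℂ) β * z).re + γ

variable (α γ : ℝ) (β : ℂ)

lemma circularForm_neg (z : ℂ) : circularForm (-α) (-γ) (-β) z = -circularForm α γ β z := by
  simp only [circularForm, map_neg, neg_mul, Complex.neg_re]
  ring

lemma circularForm_sub (ζ d : ℂ) :
    circularForm α γ β (ζ - d) =
      circularForm α (circularForm α γ β ζ) (-(2 * α * ζ + β)) d := by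
  simp only [circularForm, Complex.normSq_sub, map_neg, map_add, map_mul, map_ofNat,
    Complex.conj_ofReal, Complex.add_re, Complex.sub_re, Complex.neg_re, Complex.mul_re,
    Complex.mul_im, Complex.add_im, Complex.sub_im, Complex.neg_im, Complex.conj_re,
    Complex.conj_im, Complex.ofReal_re, Complex.ofReal_im, Complex.re_ofNat, Complex.im_ofNat]
  ring

lemma circularForm_inv {d : ℂ} (hd : d ≠ 0) :
    circularForm α γ β d⁻¹ = circularForm γ α ((starRingEnd ℂ) β) d / Complex.normSq d := by
  have hd' : Complex.normSq d ≠ 0 := by simpa using hd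
  simp only [circularForm, map_inv₀, Complex.conj_conj, Complex.mul_re, Complex.inv_re,
    Complex.inv_im, Complex.conj_re, Complex.conj_im]
  field_simp
  ring

/-- The quadratic polynomial obtained from `circularForm α γ β` by the inversion `z ↦ (ζ - z)⁻¹`
and clearing the denominator `|ζ - z|²`. Its leading coefficient is the value of the original at
`ζ`. -/
noncomputable def invertedCircularForm (ζ : ℂ) : ℂ → ℝ :=
  circularForm (circularForm α γ β ζ) α ((starRingEnd ℂ) (-(2 * α * ζ + β)))

lemma invertedCircularForm_inv_sub {ζ z : ℂ} (hz : z ≠ ζ) :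
    invertedCircularForm α γ β ζ (ζ - z)⁻¹ = circularForm α γ β z / Complex.normSq (ζ - z) := by
  rw [invertedCircularForm, circularForm_inv _ _ _ (sub_ne_zero.2 hz.symm), Complex.conj_conj,
    ← circularForm_sub, sub_sub_cancel]

lemma invertedCircularForm_inv_sub_lt_zero_iff {ζ z : ℂ} (hz : z ≠ ζ) :
    invertedCircularForm α γ β ζ (ζ - z)⁻¹ < 0 ↔ circularForm α γ β z < 0 := by
  rw [invertedCircularForm_inv_sub α γ β hz,
    div_lt_iff₀ (Complex.normSq_pos.2 (sub_ne_zero.2 hz.symm)), zero_mul]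

lemma invertedCircularForm_inv_sub_le_zero_iff {ζ z : ℂ} (hz : z ≠ ζ) :
    invertedCircularForm α γ β ζ (ζ - z)⁻¹ ≤ 0 ↔ circularForm α γ β z ≤ 0 := by
  rw [invertedCircularForm_inv_sub α γ β hz,
    div_le_iff₀ (Complex.normSq_pos.2 (sub_ne_zero.2 hz.symm)), zero_mul]

variable {α}

lemma convexOn_circularForm (hα : 0 ≤ α) : ConvexOn ℝ Set.univ (circularForm α γ β) := by
  have hsq : ConvexOn ℝ Set.univ fun z : ℂ => α * Complex.normSq z := by
    simpa only [Complex.normSq_eq_norm_sq, smul_eq_mul, Pi.pow_apply] using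
      (convexOn_univ_norm.pow (fun z _ => norm_nonneg z) 2).smul hα
  have hlin : ConvexOn ℝ Set.univ fun z : ℂ => ((starRingEnd ℂ) β * z).re :=
    (Complex.reLm ∘ₗ LinearMap.mulLeft ℝ ((starRingEnd ℂ) β)).convexOn convex_univ
  exact (hsq.add hlin).add_const γ

lemma convex_circularForm_lt_zero (hα : 0 ≤ α) : Convex ℝ {z | circularForm α γ β z < 0} := by
  simpa only [Set.mem_univ, true_and] using (convexOn_circularForm γ β hα).convex_lt 0

lemma convex_circularForm_le_zero (hα : 0 ≤ α) : Convex ℝ {z | circularForm α γ β z ≤ 0} := by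
  simpa only [Set.mem_univ, true_and] using (convexOn_circularForm γ β hα).convex_le 0

end CircularForm

section InversionConvex

/-- A subset of the plane that is convex as seen from every point `ζ` of the Riemann sphere outside
of it: `D` itself is convex (`ζ = ∞`), and for finite `ζ` the inversion `z ↦ (ζ - z)⁻¹`, which moves
`ζ` to `∞`, takes no point outside `D` into the convex hull of the image of `D`. Excluding `w = ζ`
avoids the junk value `0⁻¹ = 0`. -/
structure InversionConvex (D : Set ℂ) : Prop where
  convex : Convex ℝ D
  mem_of_inv_mem_convexHull : ∀ ζ ∉ D, ∀ w ≠ ζ,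
    (ζ - w)⁻¹ ∈ convexHull ℝ ((fun z => (ζ - z)⁻¹) '' D) → w ∈ D

lemma inversionConvex_of_exists_convex {D : Set ℂ} (hD : Convex ℝ D)
    (hinv : ∀ ζ ∉ D, ∃ K : Set ℂ, Convex ℝ K ∧ ∀ z ≠ ζ, (ζ - z)⁻¹ ∈ K ↔ z ∈ D) :
    InversionConvex D where
  convex := hD
  mem_of_inv_mem_convexHull ζ hζ w hw h := by
    obtain ⟨K, hK, hKD⟩ := hinv ζ hζ
    have himage : (fun z => (ζ - z)⁻¹) '' D ⊆ K := by
      rintro _ ⟨z, hz, rfl⟩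
      exact (hKD z (ne_of_mem_of_not_mem hz hζ)).2 hz
    exact (hKD w hw).1 (convexHull_min himage hK h)

lemma inversionConvex_circularForm_lt_zero {α : ℝ} (γ : ℝ) (β : ℂ) (hα : 0 ≤ α) :
    InversionConvex {z | circularForm α γ β z < 0} :=
  inversionConvex_of_exists_convex (convex_circularForm_lt_zero γ β hα) fun ζ hζ =>
    ⟨{u | invertedCircularForm α γ β ζ u < 0}, convex_circularForm_lt_zero _ _ (not_lt.1 hζ),
      fun _ => invertedCircularForm_inv_sub_lt_zero_iff α γ β⟩

lemma inversionConvex_circularForm_le_zero {α : ℝ} (γ : ℝ) (β : ℂ) (hα : 0 ≤ α) :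
    InversionConvex {z | circularForm α γ β z ≤ 0} :=
  inversionConvex_of_exists_convex (convex_circularForm_le_zero γ β hα) fun ζ hζ =>
    ⟨{u | invertedCircularForm α γ β ζ u ≤ 0}, convex_circularForm_le_zero _ _ (not_le.1 hζ).le,
      fun _ => invertedCircularForm_inv_sub_le_zero_iff α γ β⟩

lemma compl_circularForm_lt_zero (α γ : ℝ) (β : ℂ) :
    {z | circularForm α γ β z < 0}ᶜ = {z | circularForm (-α) (-γ) (-β) z ≤ 0} := by
  ext z
  simp only [Set.mem_compl_iff, Set.mem_ofPred_eq, circularForm_neg, not_lt, neg_nonpos]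

lemma compl_circularForm_le_zero (α γ : ℝ) (β : ℂ) :
    {z | circularForm α γ β z ≤ 0}ᶜ = {z | circularForm (-α) (-γ) (-β) z < 0} := by
  ext z
  simp only [Set.mem_compl_iff, Set.mem_ofPred_eq, circularForm_neg, not_le, neg_lt_zero]

lemma IsCircularDomain.inversionConvex_or_compl {D : Set ℂ} (hD : IsCircularDomain D) :
    InversionConvex D ∨ InversionConvex Dᶜ := by
  obtain ⟨α, γ, β, rfl | rfl⟩ := hD <;> rcases le_total 0 α with hα | hα
  · exact .inl (inversionConvex_circularForm_lt_zero γ β hα)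
  · exact .inr (compl_circularForm_lt_zero α γ β ▸
      inversionConvex_circularForm_le_zero (-γ) (-β) (neg_nonneg.2 hα))
  · exact .inl (inversionConvex_circularForm_le_zero γ β hα)
  · exact .inr (compl_circularForm_le_zero α γ β ▸
      inversionConvex_circularForm_lt_zero (-γ) (-β) (neg_nonneg.2 hα))

end InversionConvex

section PolarDerivative

/-- The polar derivative `m f - (X - w) f'` with pole `w` of a polynomial `f` of formal degree
`m`. -/
noncomputable def polarDerivative {R : Type*} [CommRing R] (m : ℕ) (w : R) (f : R[X]) : R[X] :=
  C (m : R) * f - (X - C w) * derivative f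

section CommRing

variable {R : Type*} [CommRing R] (m : ℕ) (w : R) (f : R[X])

lemma polarDerivative_eq_polarDerivative_zero_add :
    polarDerivative m w f = polarDerivative m 0 f + C w * derivative f := by
  simp only [polarDerivative, map_zero]
  ring

lemma eval_polarDerivative (x : R) :
    (polarDerivative m w f).eval x = m * f.eval x - (x - w) * (derivative f).eval x := by
  simp [polarDerivative]

lemma coeff_polarDerivative (k : ℕ) :
    (polarDerivative m w f).coeff k =
      (m - k) * f.coeff k + w * (k + 1) * f.coeff (k + 1) := by
  cases k
  · simp [polarDerivative, sub_mul, coeff_derivative, mul_coeff_zero]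
  · simp [polarDerivative, sub_mul, coeff_derivative]
    ring

variable {m f}

lemma degree_polarDerivative_le (hf : f.natDegree ≤ m + 1) :
    (polarDerivative (m + 1) w f).degree ≤ m := by
  refine (degree_le_iff_coeff_zero _ _).2 fun k hk => ?_
  have hk : m < k := Nat.cast_lt.1 hk
  rw [coeff_polarDerivative, coeff_eq_zero_of_natDegree_lt (n := k + 1) (by omega), mul_zero,
    add_zero]
  obtain rfl | hk : k = m + 1 ∨ m + 1 < k := by omega
  · rw [sub_self, zero_mul]
  · rw [coeff_eq_zero_of_natDegree_lt (by omega), mul_zero]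

end CommRing

lemma coeff_polarDerivative_of_splits {R : Type*} [CommRing R] [IsDomain R] {m : ℕ} {f : R[X]}
    (hsplits : f.Splits) (hf : f.natDegree = m + 1) (w : R) :
    (polarDerivative (m + 1) w f).coeff m =
      f.leadingCoeff * ((m + 1) * w - f.roots.sum) := by
  have hnext := hsplits.nextCoeff_eq_neg_sum_roots_mul_leadingCoeff
  rw [nextCoeff_of_natDegree_pos (by omega), hf, Nat.add_sub_cancel] at hnext
  rw [coeff_polarDerivative, hnext, leadingCoeff, hf]
  push_cast
  ring

end PolarDerivative

section Laguerre

lemma mem_of_convex_of_card_nsmul_eq_sum {𝕜 E : Type*} [Field 𝕜] [LinearOrder 𝕜]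
    [IsStrictOrderedRing 𝕜] [AddCommGroup E] [Module 𝕜 E] {K : Set E} (hK : Convex 𝕜 K)
    {s : Multiset E} (hs : s ≠ 0) (hsK : ∀ x ∈ s, x ∈ K) {x : E} (hx : s.card • x = s.sum) :
    x ∈ K := by
  classical
  have hcard : (s.card : 𝕜) ≠ 0 := by simpa using hs
  have hsum : ∑ y : s, (y : E) = s.sum := by rw [Finset.sum, Multiset.map_univ_coe]
  have hmean : ∑ y : s, (s.card : 𝕜)⁻¹ • (y : E) ∈ K :=
    hK.sum_mem (fun _ _ => by positivity) (by simp [hcard]) fun _ _ => hsK _ (Multiset.coe_mem)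
  rwa [← Finset.smul_sum, hsum, ← hx, ← Nat.cast_smul_eq_nsmul 𝕜, inv_smul_smul₀ hcard] at hmean

variable {D : Set ℂ} {n : ℕ} {f : ℂ[X]} {w : ℂ}

lemma degree_polarDerivative (hD : Convex ℝ D) (hf : f.degree = (n + 1 : ℕ))
    (hroots : ∀ z, f.IsRoot z → z ∈ D) (hw : w ∉ D) :
    (polarDerivative (n + 1) w f).degree = n := by
  have hnat : f.natDegree = n + 1 := natDegree_eq_of_degree_eq_some hf
  have hcard : f.roots.card = n + 1 := IsAlgClosed.card_roots_eq_natDegree.trans hnat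
  -- The leading coefficient can only vanish if `w` is the centroid of the zeros of `f`.
  refine degree_eq_of_le_of_coeff_ne_zero (degree_polarDerivative_le w hnat.le) ?_
  rw [coeff_polarDerivative_of_splits (IsAlgClosed.splits f) hnat]
  refine mul_ne_zero (leadingCoeff_ne_zero.2 (ne_zero_of_coe_le_degree hf.ge)) fun hcentroid => ?_
  refine hw (mem_of_convex_of_card_nsmul_eq_sum hD (s := f.roots) ?_
    (fun z hz => hroots z (isRoot_of_mem_roots hz)) ?_)
  · exact Multiset.card_pos.1 (by omega)
  · rw [hcard, nsmul_eq_mul]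
    exact_mod_cast sub_eq_zero.1 hcentroid

/-- **Laguerre's theorem**. -/
lemma mem_of_isRoot_polarDerivative (hD : InversionConvex D) (hn : n ≠ 0) (hf : f.degree = n)
    (hroots : ∀ z, f.IsRoot z → z ∈ D) (hw : w ∉ D) {ζ : ℂ}
    (hζ : (polarDerivative n w f).IsRoot ζ) : ζ ∈ D := by
  by_contra hζD
  have hfζ : f.eval ζ ≠ 0 := fun h => hζD (hroots ζ h)
  rw [IsRoot, eval_polarDerivative, sub_eq_zero] at hζ
  have hwζ : w ≠ ζ := by
    rintro rfl
    simp [hn, hfζ] at hζ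
  have hcard : f.roots.card = n :=
    IsAlgClosed.card_roots_eq_natDegree.trans (natDegree_eq_of_degree_eq_some hf)
  -- The logarithmic derivative at `ζ` exhibits `(ζ - w)⁻¹` as the mean of the `(ζ - z)⁻¹`.
  have hlog : (f.roots.map fun z => (ζ - z)⁻¹).sum = n * (ζ - w)⁻¹ := by
    simp only [← one_div, ← (IsAlgClosed.splits f).eval_derivative_div_eval_of_ne_zero hfζ]
    rw [mul_one_div, div_eq_div_iff hfζ (sub_ne_zero.2 hwζ.symm), hζ, mul_comm]
  refine hw (hD.mem_of_inv_mem_convexHull ζ hζD w hwζ (mem_of_convex_of_card_nsmul_eq_sum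
    (convex_convexHull ℝ _) (s := f.roots.map fun z => (ζ - z)⁻¹) ?_ ?_ ?_))
  · rw [← Multiset.card_pos, Multiset.card_map]
    omega
  · simp only [Multiset.mem_map]
    rintro _ ⟨z, hz, rfl⟩
    exact subset_convexHull ℝ _ ⟨z, hroots z (isRoot_of_mem_roots hz), rfl⟩
  · rw [Multiset.card_map, hcard, hlog, nsmul_eq_mul]

end Laguerre

section InvChoose

variable {K : Type*} [Field K] [CharZero K] {m k : ℕ}

lemma add_one_mul_inv_choose_succ (hk : k ≤ m) :
    ((m : K) + 1) * ((m + 1).choose k : K)⁻¹ = (m + 1 - k) * (m.choose k : K)⁻¹ := by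
  have h₀ : (m.choose k : K) ≠ 0 := Nat.cast_ne_zero.2 (Nat.choose_pos hk).ne'
  have h₁ : ((m + 1).choose k : K) ≠ 0 :=
    Nat.cast_ne_zero.2 (Nat.choose_pos (hk.trans m.le_succ)).ne'
  have hchoose : (m.choose k : K) * (m + 1) = (m + 1).choose k * (m + 1 - k) := by
    have := congrArg (Nat.cast (R := K)) (Nat.choose_mul_succ_eq m k)
    push_cast [Nat.cast_sub (hk.trans m.le_succ)] at this
    exact this
  field_simp
  linear_combination hchoose

lemma add_one_mul_inv_choose_succ_succ (hk : k ≤ m) :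
    ((m : K) + 1) * ((m + 1).choose (k + 1) : K)⁻¹ = (k + 1) * (m.choose k : K)⁻¹ := by
  have h₀ : (m.choose k : K) ≠ 0 := Nat.cast_ne_zero.2 (Nat.choose_pos hk).ne'
  have h₁ : ((m + 1).choose (k + 1) : K) ≠ 0 :=
    Nat.cast_ne_zero.2 (Nat.choose_pos (Nat.succ_le_succ hk)).ne'
  have hchoose : ((m : K) + 1) * m.choose k = (m + 1).choose (k + 1) * (k + 1) :=
    mod_cast Nat.add_one_mul_choose_eq m k
  field_simp
  linear_combination hchoose

end InvChoose

section Apolarity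

variable (m : ℕ) (f g h : ℂ[X])

lemma apol_comm : apol m g f = (-1) ^ m * apol m f g := by
  rw [apol, apol, ← Finset.sum_range_reflect, Finset.mul_sum]
  refine Finset.sum_congr rfl fun k hk => ?_
  have hk : k ≤ m := Finset.mem_range_succ_iff.1 hk
  have hsign : (-1 : ℂ) ^ (m - k) = (-1) ^ m * (-1) ^ k := by
    obtain ⟨j, rfl⟩ := Nat.exists_eq_add_of_le hk
    rw [Nat.add_sub_cancel_left, pow_add, mul_right_comm, ← mul_pow, neg_one_mul, neg_neg, one_pow,
      one_mul]
  rw [Nat.add_sub_cancel, Nat.sub_sub_self hk, Nat.choose_symm hk, hsign]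
  ring

lemma apol_add_left : apol m (f + g) h = apol m f h + apol m g h := by
  simp only [apol, coeff_add, mul_add, add_mul, Finset.sum_add_distrib]

lemma apol_C_mul_left (c : ℂ) : apol m (C c * f) h = c * apol m f h := by
  simp only [apol, coeff_C_mul, Finset.mul_sum]
  exact Finset.sum_congr rfl fun k _ => by ring

lemma apol_sub_right : apol m f (g - h) = apol m f g - apol m f h := by
  simp only [apol, coeff_sub, mul_sub, Finset.sum_sub_distrib]

lemma apol_C_mul_right (c : ℂ) : apol m f (C c * h) = c * apol m f h := by
  simp only [apol, coeff_C_mul, Finset.mul_sum]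
  exact Finset.sum_congr rfl fun k _ => by ring

lemma apol_C_right (c : ℂ) : apol m f (C c) = (-1) ^ m * f.coeff m * c := by
  rw [apol, Finset.sum_eq_single_of_mem m (Finset.self_mem_range_succ m)]
  · simp
  · intro k hk hkm
    have hk : k ≤ m := Finset.mem_range_succ_iff.1 hk
    rw [coeff_C_of_ne_zero (by omega), mul_zero]

lemma apol_succ_X_mul :
    (m + 1) * apol (m + 1) f (X * h) = apol m (polarDerivative (m + 1) 0 f) h := by
  rw [apol, Finset.sum_range_succ, Nat.sub_self, coeff_X_mul_zero, mul_zero, add_zero, apol,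
    Finset.mul_sum]
  refine Finset.sum_congr rfl fun k hk => ?_
  have hk : k ≤ m := Finset.mem_range_succ_iff.1 hk
  rw [Nat.succ_sub hk, coeff_X_mul, coeff_polarDerivative]
  push_cast
  linear_combination (-1) ^ k * f.coeff k * h.coeff (m - k) *
    add_one_mul_inv_choose_succ (K := ℂ) hk

variable {m h}

lemma apol_succ_eq_neg_apol_derivative (hh : h.natDegree ≤ m) :
    (m + 1) * apol (m + 1) f h = -apol m (derivative f) h := by
  rw [apol, Finset.sum_range_succ', Nat.sub_zero,
    coeff_eq_zero_of_natDegree_lt (Nat.lt_succ_of_le hh), mul_zero, add_zero, apol, Finset.mul_sum,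
    ← Finset.sum_neg_distrib]
  refine Finset.sum_congr rfl fun k hk => ?_
  have hk : k ≤ m := Finset.mem_range_succ_iff.1 hk
  rw [Nat.add_sub_add_right, coeff_derivative]
  linear_combination (-1) ^ (k + 1) * f.coeff (k + 1) * h.coeff (m - k) *
    add_one_mul_inv_choose_succ_succ (K := ℂ) hk

lemma apol_succ_X_sub_C_mul (w : ℂ) (hh : h.natDegree ≤ m) :
    (m + 1) * apol (m + 1) f ((X - C w) * h) = apol m (polarDerivative (m + 1) w f) h := by
  rw [sub_mul, apol_sub_right, apol_C_mul_right, polarDerivative_eq_polarDerivative_zero_add,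
    apol_add_left, apol_C_mul_left]
  linear_combination apol_succ_X_mul m f h - w * apol_succ_eq_neg_apol_derivative f hh

end Apolarity

section Grace

lemma apol_ne_zero {D : Set ℂ} (hD : InversionConvex D) {n : ℕ} {f g : ℂ[X]} (hf : f.degree = n)
    (hg : g.natDegree ≤ n) (hg0 : g ≠ 0) (hfD : ∀ z, f.IsRoot z → z ∈ D)
    (hgD : ∀ z, g.IsRoot z → z ∉ D) : apol n f g ≠ 0 := by
  induction hd : g.natDegree generalizing n f g with
  | zero =>
    obtain ⟨c, rfl⟩ := natDegree_eq_zero.1 hd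
    rw [apol_C_right]
    exact mul_ne_zero (mul_ne_zero (by simp) (coeff_ne_zero_of_eq_degree hf)) (C_ne_zero.1 hg0)
  | succ d ih =>
    obtain ⟨m, rfl⟩ : ∃ m, n = m + 1 := ⟨n - 1, by omega⟩
    obtain ⟨w, hw⟩ := IsAlgClosed.exists_root g
      (natDegree_pos_iff_degree_pos.1 (hd ▸ d.succ_pos)).ne'
    obtain ⟨h, rfl⟩ := dvd_iff_isRoot.2 hw
    have hh0 : h ≠ 0 := right_ne_zero_of_mul hg0
    rw [natDegree_mul (X_sub_C_ne_zero w) hh0, natDegree_X_sub_C] at hd hg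
    have hwD : w ∉ D := hgD w hw
    have hpolar : apol m (polarDerivative (m + 1) w f) h ≠ 0 :=
      ih (degree_polarDerivative hD.convex hf hfD hwD) (by omega) hh0
        (fun z => mem_of_isRoot_polarDerivative hD m.succ_ne_zero hf hfD hwD)
        (fun z hz => hgD z (root_mul_left_of_isRoot _ hz)) (by omega)
    rw [← apol_succ_X_sub_C_mul f w (by omega)] at hpolar
    exact right_ne_zero_of_mul hpolar

theorem stmt_2_general {D : Set ℂ} (hD : InversionConvex D ∨ InversionConvex Dᶜ) {n : ℕ}
    {f g : ℂ[X]} (hf : f.degree = n) (hg : g.degree = n) (hap : apol n f g = 0)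
    (hroots : ∀ z, f.IsRoot z → z ∈ D) : ∃ z ∈ D, g.IsRoot z := by
  by_contra! hcon
  have hgD : ∀ z, g.IsRoot z → z ∉ D := fun z hz hzD => hcon z hzD hz
  rcases hD with hD | hD
  · exact apol_ne_zero hD hf (natDegree_le_of_degree_le hg.le) (ne_zero_of_coe_le_degree hg.ge)
      hroots hgD hap
  · refine apol_ne_zero hD hg (natDegree_le_of_degree_le hf.le) (ne_zero_of_coe_le_degree hf.ge)
      hgD (fun z hz => not_not_intro (hroots z hz)) ?_
    rw [apol_comm, hap, mul_zero]

end Grace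

/-- Grace's Theorem. -/
theorem stmt_2 (D : Set ℂ) (hD : IsCircularDomain D) (n : ℕ) (hn : 1 ≤ n)
    (f g : Polynomial ℂ) (hf : f.natDegree = n) (hg : g.natDegree = n)
    (hap : apol n f g = 0)
    (hroots : ∀ z : ℂ, f.IsRoot z → z ∈ D) :
    ∃ z ∈ D, g.IsRoot z := by
  exact stmt_2_general hD.inversionConvex_or_compl
    ((degree_eq_iff_natDegree_eq_of_pos hn).2 hf) ((degree_eq_iff_natDegree_eq_of_pos hn).2 hg)
    hap hroots
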